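/- Guarded interpolation for L*₁◇_m: if Γ[Δ] ⇒ C is provable in L*₁◇_m, all types occurring in it are guarded (the unit 1 occurs only as immediate subtype of some ◇_i 1), and Δ is a nonempty hedge, then there is a guarded type E with Δ ⇒ E and Γ[E] ⇒ C provable, σ_i(E) ≤ min(σ_i(Δ), σ_i(Γ[·] ⇒ C)), and τ_i(E) ≤ min(τ_i(Δ), τ_i(Γ[·] ⇒ C)) for each i. -/

import Mathlib

/-- Types of the multimodal bracketed Lambek calculus. -/
inductive ITy where
  | prim : ℕ → ITy
  | one  : ITy
  | ldiv : ITy → ITy → ITy   -- ldiv A B = A \ B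
  | rdiv : ITy → ITy → ITy   -- rdiv B A = B / A
  | mul  : ITy → ITy → ITy
  | dia  : ℕ → ITy → ITy
  | box  : ℕ → ITy → ITy
deriving DecidableEq

/-- Type trees: leaves labeled by types, internal nodes are indexed brackets. -/
inductive ITree where
  | leaf : ITy → ITree
  | node : ℕ → List ITree → ITree

abbrev IHedge := List ITree

/-- Contexts: a hedge with one distinguished hole. -/
inductive ICtx where
  | hole : IHedge → IHedge → ICtx
  | brk  : ℕ → ICtx → IHedge → IHedge → ICtx

/-- Substitution of a hedge for the hole of a context. -/
def ICtx.plug : ICtx → IHedge → IHedge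
  | .hole pre post, D => pre ++ D ++ post
  | .brk i c pre post, D => pre ++ (ITree.node i (c.plug D) :: post)

/-- Generators of the free group: primitive types, left brackets, right brackets. -/
abbrev Gen := ℕ ⊕ ℕ ⊕ ℕ

def lb (i : ℕ) : FreeGroup Gen := FreeGroup.of (Sum.inr (Sum.inl i))
def rb (i : ℕ) : FreeGroup Gen := FreeGroup.of (Sum.inr (Sum.inr i))

/-- Free group interpretation of types. -/
def interpTy : ITy → FreeGroup Gen
  | .prim p => FreeGroup.of (Sum.inl p)
  | .one => 1
  | .ldiv A B => (interpTy A)⁻¹ * interpTy B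
  | .rdiv B A => interpTy B * (interpTy A)⁻¹
  | .mul A B => interpTy A * interpTy B
  | .dia i A => lb i * interpTy A * rb i
  | .box i A => (lb i)⁻¹ * interpTy A * (rb i)⁻¹

mutual
/-- Free group interpretation of type trees. -/
def interpTree : ITree → FreeGroup Gen
  | .leaf A => interpTy A
  | .node i ts => lb i * interpHedge ts * rb i
/-- Free group interpretation of hedges. -/
def interpHedge : List ITree → FreeGroup Gen
  | [] => 1
  | t :: ts => interpTree t * interpHedge ts
end

/-- Length of a type. -/
def lenTy : ITy → ℕ
  | .prim _ => 1
  | .one => 0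
  | .ldiv A B => lenTy A + lenTy B
  | .rdiv B A => lenTy B + lenTy A
  | .mul A B => lenTy A + lenTy B
  | .dia _ A => lenTy A + 2
  | .box _ A => lenTy A + 2

/-- Number of occurrences of the primitive type `p_i` in a type. -/
def sigmaTy (i : ℕ) : ITy → ℕ
  | .prim p => if p = i then 1 else 0
  | .one => 0
  | .ldiv A B => sigmaTy i A + sigmaTy i B
  | .rdiv B A => sigmaTy i B + sigmaTy i A
  | .mul A B => sigmaTy i A + sigmaTy i B
  | .dia _ A => sigmaTy i A
  | .box _ A => sigmaTy i A

/-- Total number of occurrences of `◇_i`, `□↓_i` in a type. -/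
def tauTy (i : ℕ) : ITy → ℕ
  | .prim _ => 0
  | .one => 0
  | .ldiv A B => tauTy i A + tauTy i B
  | .rdiv B A => tauTy i B + tauTy i A
  | .mul A B => tauTy i A + tauTy i B
  | .dia j A => (if j = i then 1 else 0) + tauTy i A
  | .box j A => (if j = i then 1 else 0) + tauTy i A

mutual
def sigmaTree (i : ℕ) : ITree → ℕ
  | .leaf A => sigmaTy i A
  | .node _ ts => sigmaHedge i ts
def sigmaHedge (i : ℕ) : List ITree → ℕ
  | [] => 0
  | t :: ts => sigmaTree i t + sigmaHedge i ts
end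

mutual
/-- Total occurrences of `⟨_i`, `◇_i`, `□↓_i` in a tree. -/
def tauTree (i : ℕ) : ITree → ℕ
  | .leaf A => tauTy i A
  | .node j ts => (if j = i then 1 else 0) + tauHedge i ts
def tauHedge (i : ℕ) : List ITree → ℕ
  | [] => 0
  | t :: ts => tauTree i t + tauHedge i ts
end

def sigmaCtx (i : ℕ) : ICtx → ℕ
  | .hole pre post => sigmaHedge i pre + sigmaHedge i post
  | .brk _ c pre post => sigmaHedge i pre + sigmaCtx i c + sigmaHedge i post

def tauCtx (i : ℕ) : ICtx → ℕ
  | .hole pre post => tauHedge i pre + tauHedge i post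
  | .brk j c pre post => (if j = i then 1 else 0) + tauHedge i pre + tauCtx i c + tauHedge i post
/-- L*₁◇_m : the multimodal Lambek calculus with brackets and unit, empty antecedents allowed. -/
inductive IProvS1 : IHedge → ITy → Prop where
  | id (p) : IProvS1 [.leaf (.prim p)] (.prim p)
  | ldivL (G : IHedge) (D : ICtx) (A B C) :
      IProvS1 G A → IProvS1 (D.plug [.leaf B]) C →
      IProvS1 (D.plug (G ++ [.leaf (.ldiv A B)])) C
  | ldivR (Pi : IHedge) (A B) :
      IProvS1 (.leaf A :: Pi) B → IProvS1 Pi (.ldiv A B)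
  | rdivL (G : IHedge) (D : ICtx) (A B C) :
      IProvS1 G A → IProvS1 (D.plug [.leaf B]) C →
      IProvS1 (D.plug (.leaf (.rdiv B A) :: G)) C
  | rdivR (Pi : IHedge) (A B) :
      IProvS1 (Pi ++ [.leaf A]) B → IProvS1 Pi (.rdiv B A)
  | mulL (G : ICtx) (A B C) :
      IProvS1 (G.plug [.leaf A, .leaf B]) C → IProvS1 (G.plug [.leaf (.mul A B)]) C
  | mulR (G D : IHedge) (A B) :
      IProvS1 G A → IProvS1 D B → IProvS1 (G ++ D) (.mul A B)
  | diaL (G : ICtx) (i A B) :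
      IProvS1 (G.plug [.node i [.leaf A]]) B → IProvS1 (G.plug [.leaf (.dia i A)]) B
  | diaR (G : IHedge) (i A) :
      IProvS1 G A → IProvS1 [.node i G] (.dia i A)
  | boxL (G : ICtx) (i A B) :
      IProvS1 (G.plug [.leaf A]) B → IProvS1 (G.plug [.node i [.leaf (.box i A)]]) B
  | boxR (G : IHedge) (i A) :
      IProvS1 [.node i G] A → IProvS1 G (.box i A)
  | oneL (G : ICtx) (A) :
      IProvS1 (G.plug []) A → IProvS1 (G.plug [.leaf .one]) A
  | oneR : IProvS1 [] .one
  | cut (G : IHedge) (D : ICtx) (A B) :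
      IProvS1 G A → IProvS1 (D.plug [.leaf A]) B → IProvS1 (D.plug G) B
/-- Guarded types: the unit occurs only as the immediate subtype of some `◇_i`. -/
def ITy.guarded : ITy → Prop
  | .prim _ => True
  | .one => False
  | .ldiv A B => A.guarded ∧ B.guarded
  | .rdiv B A => B.guarded ∧ A.guarded
  | .mul A B => A.guarded ∧ B.guarded
  | .dia _ .one => True
  | .dia _ A => A.guarded
  | .box _ A => A.guarded

mutual
def guardedTree : ITree → Prop
  | .leaf A => A.guarded
  | .node _ ts => guardedHedge ts
def guardedHedge : List ITree → Prop
  | [] => True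
  | t :: ts => guardedTree t ∧ guardedHedge ts
end

/-!
Interpolation is read off cut-free derivations. If the last rule does not involve `Δ`, the
interpolant of the premise still works; if `Δ` cuts the principal hedge of a left rule for `\` or
`/` in two, the interpolants found in the two premises are combined into `F \ E`, `E / F` or
`E • F`. A bare `1` never arises, because `◇_i 1` is treated as a constant that behaves like the
empty bracket `⟨_i⟩_i`; the interpolants are therefore built from primitive types and the `◇_i 1`.

That the cut rule and the unit rules can be avoided is shown by a phase semantics. A type is
interpreted by a set of hedges that is closed for the Galois connection between hedges and cut-free
derivable sequents with a hole. All rules, including cut, are sound for this interpretation, while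
for guarded `A` the hedge `A` belongs to the value of `A` and every element of that value derives
`A` without cut.
-/

open Order

/-! ### Occurrences of hedges in contexts -/

attribute [local simp] ICtx.plug

attribute [local grind =] sigmaTy tauTy sigmaTree sigmaHedge tauTree tauHedge sigmaCtx tauCtx

@[grind =]
theorem sigmaHedge_append (i : ℕ) (X Y : IHedge) :
    sigmaHedge i (X ++ Y) = sigmaHedge i X + sigmaHedge i Y := by
  induction X <;> grind

@[grind =]
theorem tauHedge_append (i : ℕ) (X Y : IHedge) :
    tauHedge i (X ++ Y) = tauHedge i X + tauHedge i Y := by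
  induction X <;> grind

theorem append_eq_append_cons {α : Type*} {a b p q : List α} {t : α} (h : a ++ b = p ++ t :: q) :
    (∃ v, a = p ++ t :: v ∧ q = v ++ b) ∨ ∃ u, b = u ++ t :: q ∧ p = a ++ u := by
  rcases List.append_eq_append_iff.1 h with ⟨u, hp, hb⟩ | ⟨_ | ⟨s, v⟩, ha, hq⟩
  · exact .inr ⟨u, hb, hp⟩
  · exact .inr ⟨[], by simpa using hq.symm, by simpa using ha.symm⟩
  · obtain ⟨rfl, hv⟩ := List.cons.inj hq
    exact .inl ⟨v, ha, hv⟩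

namespace ICtx

@[grind =]
theorem sigmaHedge_plug (i : ℕ) (c : ICtx) (X : IHedge) :
    sigmaHedge i (c.plug X) = sigmaCtx i c + sigmaHedge i X := by
  induction c <;> grind [plug]

@[grind =]
theorem tauHedge_plug (i : ℕ) (c : ICtx) (X : IHedge) :
    tauHedge i (c.plug X) = tauCtx i c + tauHedge i X := by
  induction c <;> grind [plug]

theorem plug_ne_nil (c : ICtx) {X : IHedge} (hX : X ≠ []) : c.plug X ≠ [] := by
  cases c <;> simp [hX]

/-- Composition of contexts: `c.comp k` puts the context `k` into the hole of `c`. -/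
def comp : ICtx → ICtx → ICtx
  | .hole a b, .hole p q => .hole (a ++ p) (q ++ b)
  | .hole a b, .brk i k p q => .brk i k (a ++ p) (q ++ b)
  | .brk i c a b, k => .brk i (comp c k) a b

@[simp]
theorem plug_comp (c k : ICtx) (X : IHedge) : (c.comp k).plug X = c.plug (k.plug X) := by
  induction c with
  | hole a b => cases k <;> simp [comp]
  | brk i c a b ih => simp [comp, ih]

@[simp]
theorem comp_hole_nil (c : ICtx) : c.comp (.hole [] []) = c := by
  induction c with
  | hole a b => simp [comp]
  | brk i c a b ih => simp [comp, ih]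

@[grind =]
theorem sigmaCtx_comp (i : ℕ) (c k : ICtx) :
    sigmaCtx i (c.comp k) = sigmaCtx i c + sigmaCtx i k := by
  have h := congrArg (sigmaHedge i) (plug_comp c k [])
  grind

@[grind =]
theorem tauCtx_comp (i : ℕ) (c k : ICtx) :
    tauCtx i (c.comp k) = tauCtx i c + tauCtx i k := by
  have h := congrArg (tauHedge i) (plug_comp c k [])
  grind

theorem singleton_eq_plug {t : ITree} {K : ICtx} {D : IHedge} (hD : D ≠ [])
    (h : [t] = K.plug D) :
    K = .hole [] [] ∨ ∃ i k, K = .brk i k [] [] ∧ t = .node i (k.plug D) := by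
  cases K <;> simp_all [List.singleton_eq_append_iff, List.append_eq_singleton_iff]

theorem eq_hole_of_leaf_eq_plug {A : ITy} {K : ICtx} {D : IHedge} (hD : D ≠ [])
    (h : [.leaf A] = K.plug D) : K = .hole [] [] := by
  simpa using singleton_eq_plug hD h

theorem append_eq_plug {S T : IHedge} {K : ICtx} {D : IHedge} (h : S ++ T = K.plug D) :
    (∃ k, K = comp (.hole [] T) k ∧ S = k.plug D) ∨
    (∃ k, K = comp (.hole S []) k ∧ T = k.plug D) ∨
    ∃ a b U V, U ≠ [] ∧ V ≠ [] ∧ K = .hole a b ∧ D = U ++ V ∧ S = a ++ U ∧ T = V ++ b := by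
  cases K with
  | hole a b =>
    simp only [plug, List.append_assoc] at h
    rcases List.append_eq_append_iff.1 h with ⟨u, rfl, rfl⟩ | ⟨U, rfl, h'⟩
    · exact .inr (.inl ⟨.hole u b, by simp [comp]⟩)
    · rcases List.append_eq_append_iff.1 h' with ⟨v, rfl, rfl⟩ | ⟨V, rfl, rfl⟩
      · exact .inl ⟨.hole a v, by simp [comp]⟩
      · rcases eq_or_ne U [] with rfl | hU
        · exact .inr (.inl ⟨.hole [] b, by simp [comp]⟩)
        rcases eq_or_ne V [] with rfl | hV
        · exact .inl ⟨.hole a [], by simp [comp]⟩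
        exact .inr (.inr ⟨a, b, U, V, hU, hV, rfl, rfl, rfl, rfl⟩)
  | brk i c p q =>
    rcases append_eq_append_cons h with ⟨v, rfl, rfl⟩ | ⟨u, rfl, rfl⟩
    · exact .inl ⟨.brk i c p v, by simp [comp]⟩
    · exact .inr (.inl ⟨.brk i c u q, by simp [comp]⟩)

/-- Relative position of two occurrences in one hedge: if `G[D] = c[X]`, then
`G.RelPos D c X` (see `relPos_of_plug_eq`). In `disjoint`, the families `P` and `Q` arise from a
context with two holes, by filling one of them. -/
inductive RelPos : ICtx → IHedge → ICtx → IHedge → Prop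
  | around (G K : ICtx) (X : IHedge) : RelPos G (K.plug X) (G.comp K) X
  | inside (c K : ICtx) (D : IHedge) : RelPos (c.comp K) D c (K.plug D)
  | disjoint (P Q : IHedge → ICtx) (D X : IHedge) (h : ∀ Y Z, (P Y).plug Z = (Q Z).plug Y) :
      RelPos (P X) D (Q D) X
  | overlapLeft (H : ICtx) {U V W : IHedge} (hU : U ≠ []) (hV : V ≠ []) (hW : W ≠ []) :
      RelPos (H.comp (.hole [] W)) (U ++ V) (H.comp (.hole U [])) (V ++ W)
  | overlapRight (H : ICtx) {U V W : IHedge} (hU : U ≠ []) (hV : V ≠ []) (hW : W ≠ []) :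
      RelPos (H.comp (.hole U [])) (V ++ W) (H.comp (.hole [] W)) (U ++ V)

namespace RelPos

theorem symm {G c : ICtx} {D X : IHedge} (h : RelPos G D c X) : RelPos c X G D := by
  cases h with
  | around _ K _ => exact .inside _ K _
  | inside _ K _ => exact .around _ K _
  | disjoint P Q _ _ h => exact .disjoint Q P _ _ fun Y Z => (h Z Y).symm
  | overlapLeft H hU hV hW => exact .overlapRight H hU hV hW
  | overlapRight H hU hV hW => exact .overlapLeft H hU hV hW

theorem brk {G c : ICtx} {D X : IHedge} (h : RelPos G D c X) (i : ℕ) (a b : IHedge) :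
    RelPos (.brk i G a b) D (.brk i c a b) X := by
  cases h with
  | around _ K _ => exact .around (.brk i G a b) K X
  | inside _ K _ => exact .inside (.brk i c a b) K D
  | disjoint P Q _ _ h =>
    exact .disjoint (fun Y => .brk i (P Y) a b) (fun Z => .brk i (Q Z) a b) D X
      fun Y Z => by simp [h Y Z]
  | overlapLeft H hU hV hW => exact .overlapLeft (.brk i H a b) hU hV hW
  | overlapRight H hU hV hW => exact .overlapRight (.brk i H a b) hU hV hW

theorem hole_append_hole {D b u X b' : IHedge} (a : IHedge) (h : D ++ b = u ++ (X ++ b')) :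
    RelPos (.hole a b) D (.hole (a ++ u) b') X := by
  rcases List.append_eq_append_iff.1 h with ⟨v, rfl, rfl⟩ | ⟨V, rfl, h'⟩
  · exact .disjoint (fun Y => .hole a (v ++ (Y ++ b'))) (fun Z => .hole (a ++ (Z ++ v)) b') D X
      fun Y Z => by simp
  rcases List.append_eq_append_iff.1 h' with ⟨w, rfl, rfl⟩ | ⟨W, rfl, rfl⟩
  · simpa [comp] using around (.hole a b) (.hole u w) X
  rcases eq_or_ne u [] with rfl | hU
  · simpa [comp] using inside (.hole a b') (.hole [] W) V
  rcases eq_or_ne V [] with rfl | hV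
  · simpa using disjoint (fun Y => .hole a (Y ++ b')) (fun Z => .hole (a ++ Z) b') u W
      fun Y Z => by simp
  rcases eq_or_ne W [] with rfl | hW
  · simpa [comp] using around (.hole a b') (.hole u []) V
  simpa [comp] using overlapLeft (.hole a b') hU hV hW

theorem hole_brk {a b p q D X : IHedge} {i : ℕ} {k : ICtx}
    (h : a ++ (D ++ b) = p ++ .node i (k.plug X) :: q) :
    RelPos (.hole a b) D (.brk i k p q) X := by
  rcases append_eq_append_cons h with ⟨v, rfl, rfl⟩ | ⟨u, hu, rfl⟩
  · exact .disjoint (fun Y => .hole (p ++ .node i (k.plug Y) :: v) b)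
      (fun Z => .brk i k p (v ++ (Z ++ b))) D X fun Y Z => by simp
  rcases append_eq_append_cons hu with ⟨v, rfl, rfl⟩ | ⟨v, rfl, rfl⟩
  · simpa [comp] using around (.hole a b) (.brk i k u v) X
  · exact .disjoint (fun Y => .hole a (v ++ .node i (k.plug Y) :: q))
      (fun Z => .brk i k (a ++ (Z ++ v)) q) D X fun Y Z => by simp

theorem brk_brk {a v q D X : IHedge} {i j : ℕ} {G c : ICtx} :
    RelPos (.brk i G a (v ++ .node j (c.plug X) :: q)) D
      (.brk j c (a ++ .node i (G.plug D) :: v) q) X :=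
  .disjoint (fun Y => .brk i G a (v ++ .node j (c.plug Y) :: q))
    (fun Z => .brk j c (a ++ .node i (G.plug Z) :: v) q) D X fun Y Z => by simp

end RelPos

theorem relPos_of_plug_eq {G c : ICtx} {D X : IHedge} (h : G.plug D = c.plug X) :
    RelPos G D c X := by
  induction G generalizing c with
  | hole a b =>
    cases c with
    | hole a' b' =>
      simp only [plug, List.append_assoc] at h
      rcases List.append_eq_append_iff.1 h with ⟨u, rfl, h'⟩ | ⟨u, rfl, h'⟩
      · exact .hole_append_hole a h'
      · exact (RelPos.hole_append_hole a' h').symm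
    | brk i k p q => exact .hole_brk (by simpa using h)
  | brk i k a b ih =>
    cases c with
    | hole a' b' => exact (RelPos.hole_brk (by simpa using h.symm)).symm
    | brk j k' p q =>
      rcases append_eq_append_cons h with ⟨v, rfl, rfl⟩ | ⟨_ | ⟨t, v⟩, h', rfl⟩
      · exact RelPos.brk_brk.symm
      · simp only [List.nil_append, List.cons.injEq, ITree.node.injEq] at h'
        obtain ⟨⟨rfl, hG⟩, rfl⟩ := h'
        simpa using (ih hG).brk i a b
      · obtain ⟨rfl, rfl⟩ := List.cons.inj h'
        exact .brk_brk

end ICtx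

/-! ### Interpolation for cut-free derivations -/

/-- Cut-free derivability, with the unit rules confined to `◇_i 1`, which behaves as the empty
bracket `⟨_i⟩_i`. For guarded sequents this is equivalent to `IProvS1`
(see `CutFree.toIProvS1` and `IProvS1.cutFree`). -/
inductive CutFree : IHedge → ITy → Prop where
  | id (p : ℕ) : CutFree [.leaf (.prim p)] (.prim p)
  | ldivL {S : IHedge} {c : ICtx} {A B C : ITy} :
      CutFree S A → CutFree (c.plug [.leaf B]) C → CutFree (c.plug (S ++ [.leaf (.ldiv A B)])) C
  | ldivR {S : IHedge} {A B : ITy} : CutFree (.leaf A :: S) B → CutFree S (.ldiv A B)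
  | rdivL {S : IHedge} {c : ICtx} {A B C : ITy} :
      CutFree S A → CutFree (c.plug [.leaf B]) C → CutFree (c.plug (.leaf (.rdiv B A) :: S)) C
  | rdivR {S : IHedge} {A B : ITy} : CutFree (S ++ [.leaf A]) B → CutFree S (.rdiv B A)
  | mulL {c : ICtx} {A B C : ITy} :
      CutFree (c.plug [.leaf A, .leaf B]) C → CutFree (c.plug [.leaf (.mul A B)]) C
  | mulR {S T : IHedge} {A B : ITy} : CutFree S A → CutFree T B → CutFree (S ++ T) (.mul A B)
  | diaL {c : ICtx} {i : ℕ} {A C : ITy} :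
      CutFree (c.plug [.node i [.leaf A]]) C → CutFree (c.plug [.leaf (.dia i A)]) C
  | diaR {S : IHedge} {i : ℕ} {A : ITy} : CutFree S A → CutFree [.node i S] (.dia i A)
  | boxL {c : ICtx} {i : ℕ} {A C : ITy} :
      CutFree (c.plug [.leaf A]) C → CutFree (c.plug [.node i [.leaf (.box i A)]]) C
  | boxR {S : IHedge} {i : ℕ} {A : ITy} : CutFree [.node i S] A → CutFree S (.box i A)
  | diaOneL {c : ICtx} {i : ℕ} {C : ITy} :
      CutFree (c.plug [.node i []]) C → CutFree (c.plug [.leaf (.dia i .one)]) C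
  | diaOneR (i : ℕ) : CutFree [.node i []] (.dia i .one)

theorem CutFree.toIProvS1 {S : IHedge} {C : ITy} (h : CutFree S C) : IProvS1 S C := by
  induction h with
  | id p => exact .id p
  | ldivL _ _ ihS ihC => exact .ldivL _ _ _ _ _ ihS ihC
  | ldivR _ ih => exact .ldivR _ _ _ ih
  | rdivL _ _ ihS ihC => exact .rdivL _ _ _ _ _ ihS ihC
  | rdivR _ ih => exact .rdivR _ _ _ ih
  | mulL _ ih => exact .mulL _ _ _ _ ih
  | mulR _ _ ihS ihT => exact .mulR _ _ _ _ ihS ihT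
  | diaL _ ih => exact .diaL _ _ _ _ ih
  | diaR _ ih => exact .diaR _ _ _ ih
  | boxL _ ih => exact .boxL _ _ _ _ ih
  | boxR _ ih => exact .boxR _ _ _ ih
  | @diaOneL c i C _ ih =>
    refine .diaL _ _ _ _ ?_
    simpa using IProvS1.oneL (c.comp (.brk i (.hole [] []) [] [])) C (by simpa using ih)
  | diaOneR i => exact .diaR _ _ _ .oneR

theorem ITy.guarded.dia {A : ITy} (hA : A.guarded) (i : ℕ) : (ITy.dia i A).guarded := by
  cases A <;> simp_all [ITy.guarded]

theorem ITy.guarded_of_dia {i : ℕ} {A : ITy} (h : (ITy.dia i A).guarded) :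
    A = .one ∨ A.guarded := by
  cases A <;> simp_all [ITy.guarded]

/-- `E` interpolates the derivable sequent `G[D] ⇒ C` at the occurrence of `D`. -/
structure Interpolant (G : ICtx) (D : IHedge) (C E : ITy) : Prop where
  guarded : E.guarded
  left : CutFree D E
  right : CutFree (G.plug [.leaf E]) C
  counts_le : ∀ i,
    sigmaTy i E ≤ min (sigmaHedge i D) (sigmaCtx i G + sigmaTy i C) ∧
    tauTy i E ≤ min (tauHedge i D) (tauCtx i G + tauTy i C)

namespace Interpolant

theorem map_left {G : ICtx} {D D' : IHedge} {C E : ITy} (h : Interpolant G D C E)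
    (hleft : CutFree D E → CutFree D' E)
    (hcounts : ∀ i, sigmaHedge i D ≤ sigmaHedge i D' ∧ tauHedge i D ≤ tauHedge i D') :
    Interpolant G D' C E where
  guarded := h.guarded
  left := hleft h.left
  right := h.right
  counts_le i := by grind [h.counts_le i]

theorem map_right {G G' : ICtx} {D : IHedge} {C C' E : ITy} (h : Interpolant G D C E)
    (hright : CutFree (G.plug [.leaf E]) C → CutFree (G'.plug [.leaf E]) C')
    (hcounts : ∀ i, sigmaCtx i G + sigmaTy i C ≤ sigmaCtx i G' + sigmaTy i C' ∧
      tauCtx i G + tauTy i C ≤ tauCtx i G' + tauTy i C') :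
    Interpolant G' D C' E where
  guarded := h.guarded
  left := h.left
  right := hright h.right
  counts_le i := by grind [h.counts_le i, hcounts i]

theorem mul {a b U V : IHedge} {A B E F : ITy} (hE : Interpolant (.hole a []) U A E)
    (hF : Interpolant (.hole [] b) V B F) :
    Interpolant (.hole a b) (U ++ V) (.mul A B) (.mul E F) where
  guarded := ⟨hE.guarded, hF.guarded⟩
  left := hE.left.mulR hF.left
  right := .mulL (by simpa using hE.right.mulR hF.right)
  counts_le i := by grind [hE.counts_le i, hF.counts_le i]

theorem dia {S : IHedge} {A E : ITy} (h : Interpolant (.hole [] []) S A E) (i : ℕ) :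
    Interpolant (.hole [] []) [.node i S] (.dia i A) (.dia i E) where
  guarded := h.guarded.dia i
  left := h.left.diaR
  right := .diaL (by simpa using h.right.diaR (i := i))
  counts_le j := by grind [h.counts_le j]

theorem diaOne {A : ITy} (hA : CutFree [] A) (i : ℕ) :
    Interpolant (.hole [] []) [.node i []] (.dia i A) (.dia i .one) where
  guarded := trivial
  left := .diaOneR i
  right := .diaOneL (by simpa using hA.diaR (i := i))
  counts_le j := by grind

theorem box {c : ICtx} {A C E : ITy} (h : Interpolant c [.leaf A] C E) (i : ℕ) :
    Interpolant (c.comp (.brk i (.hole [] []) [] [])) [.leaf (.box i A)] C (.box i E) where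
  guarded := h.guarded
  left := .boxR (.boxL (c := .hole [] []) (by simpa using h.left))
  right := by simpa using h.right.boxL (i := i)
  counts_le j := by grind [h.counts_le j]

theorem ldiv {H : ICtx} {S T D : IHedge} {A B C E F : ITy}
    (hF : Interpolant (.hole [] T) S A F) (hE : Interpolant H (.leaf B :: D) C E) :
    Interpolant (H.comp (.hole S [])) (T ++ .leaf (.ldiv A B) :: D) C (.ldiv F E) where
  guarded := ⟨hF.guarded, hE.guarded⟩
  left := .ldivR (by
    simpa using hF.right.ldivL (c := .hole [] D) (by simpa using hE.left))
  right := by simpa using hF.left.ldivL hE.right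
  counts_le i := by grind [hE.counts_le i, hF.counts_le i]

theorem rdiv {H : ICtx} {S T D : IHedge} {A B C E F : ITy}
    (hF : Interpolant (.hole T []) S A F) (hE : Interpolant H (D ++ [.leaf B]) C E) :
    Interpolant (H.comp (.hole [] S)) (D ++ .leaf (.rdiv B A) :: T) C (.rdiv E F) where
  guarded := ⟨hE.guarded, hF.guarded⟩
  left := .rdivR (by
    simpa using hF.right.rdivL (c := .hole D []) (by simpa using hE.left))
  right := by simpa using hF.left.rdivL hE.right
  counts_le i := by grind [hE.counts_le i, hF.counts_le i]

theorem mul_ldiv {H : ICtx} {S T D : IHedge} {A B C E F : ITy}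
    (hE : Interpolant (H.comp (.hole [] [.leaf B])) D C E)
    (hF : Interpolant (.hole [] T) S A F) :
    Interpolant (H.comp (.hole [] (T ++ [.leaf (.ldiv A B)]))) (D ++ S) C (.mul E F) where
  guarded := ⟨hE.guarded, hF.guarded⟩
  left := hE.left.mulR hF.left
  right := .mulL (by
    simpa using hF.right.ldivL (c := H.comp (.hole [.leaf E] [])) (by simpa using hE.right))
  counts_le i := by grind [hE.counts_le i, hF.counts_le i]

theorem mul_rdiv {H : ICtx} {S T D : IHedge} {A B C E F : ITy}
    (hF : Interpolant (.hole T []) S A F)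
    (hE : Interpolant (H.comp (.hole [.leaf B] [])) D C E) :
    Interpolant (H.comp (.hole (.leaf (.rdiv B A) :: T) [])) (S ++ D) C (.mul F E) where
  guarded := ⟨hF.guarded, hE.guarded⟩
  left := hF.left.mulR hE.left
  right := .mulL (by
    simpa using hF.right.rdivL (c := H.comp (.hole [] [.leaf E])) (by simpa using hE.right))
  counts_le i := by grind [hE.counts_le i, hF.counts_le i]

end Interpolant

/-- The interpolation property of the sequent `S ⇒ C`: every occurrence of a nonempty hedge in `S`
has an interpolant. -/
def Interpolable (S : IHedge) (C : ITy) : Prop :=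
  ∀ G D, D ≠ [] → S = G.plug D → ∃ E, Interpolant G D C E

/-- A left rule replacing the hedge `Y` of its (main) premise by `X`: the rule is sound for
`CutFree` in every context and does not lose any of the counted symbols. -/
structure LeftStep (X Y : IHedge) : Prop where
  ne_nil : Y ≠ []
  derive : ∀ {c : ICtx} {C : ITy}, CutFree (c.plug Y) C → CutFree (c.plug X) C
  counts_le : ∀ i, sigmaHedge i Y ≤ sigmaHedge i X ∧ tauHedge i Y ≤ tauHedge i X

namespace LeftStep

theorem plug {X Y : IHedge} (h : LeftStep X Y) (k : ICtx) : LeftStep (k.plug X) (k.plug Y) where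
  ne_nil := k.plug_ne_nil h.ne_nil
  derive {c C} hY := by
    simpa using h.derive (c := c.comp k) (by simpa using hY)
  counts_le i := by grind [h.counts_le i]

theorem exists_interpolant {X Y : IHedge} (h : LeftStep X Y) {G : ICtx} {C : ITy}
    (hY : Interpolable (G.plug Y) C) : ∃ E, Interpolant G X C E := by
  obtain ⟨E, hE⟩ := hY G Y h.ne_nil rfl
  exact ⟨E, hE.map_left (fun hl => by simpa using h.derive (c := .hole [] []) (by simpa using hl))
    h.counts_le⟩

/-- The occurrences that contain or avoid the principal hedge `X` inherit their interpolant from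
the premise, so only the three remaining kinds depend on the rule. -/
theorem interpolable {X Y : IHedge} (h : LeftStep X Y) {c : ICtx} {C : ITy}
    (hY : Interpolable (c.plug Y) C)
    (inside : ∀ K D, K ≠ .hole [] [] → D ≠ [] → X = K.plug D →
      ∃ E, Interpolant (c.comp K) D C E)
    (overlapLeft : ∀ (H : ICtx) (U V W : IHedge), U ≠ [] → V ≠ [] → W ≠ [] →
      c = H.comp (.hole U []) → X = V ++ W →
      ∃ E, Interpolant (H.comp (.hole [] W)) (U ++ V) C E)
    (overlapRight : ∀ (H : ICtx) (U V W : IHedge), U ≠ [] → V ≠ [] → W ≠ [] →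
      c = H.comp (.hole [] W) → X = U ++ V →
      ∃ E, Interpolant (H.comp (.hole U [])) (V ++ W) C E) :
    Interpolable (c.plug X) C := by
  intro G D hD hX
  cases ICtx.relPos_of_plug_eq hX.symm with
  | around _ K _ => exact (h.plug K).exists_interpolant (by simpa using hY)
  | inside _ K _ =>
    rcases eq_or_ne K (.hole [] []) with rfl | hK
    · simpa using h.exists_interpolant hY
    · exact inside K D hK hD rfl
  | disjoint P Q _ _ hPQ =>
    obtain ⟨E, hE⟩ := hY (P Y) D hD (hPQ Y D).symm
    refine ⟨E, hE.map_right (fun hr => ?_) fun i => ?_⟩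
    · rw [hPQ] at hr ⊢
      exact h.derive hr
    · have hσ := fun Z => congrArg (sigmaHedge i) (hPQ Z [])
      have hτ := fun Z => congrArg (tauHedge i) (hPQ Z [])
      grind [h.counts_le i]
  | overlapLeft H hU hV hW => exact overlapLeft H _ _ _ hU hV hW rfl rfl
  | overlapRight H hU hV hW => exact overlapRight H _ _ _ hU hV hW rfl rfl

theorem interpolable_singleton {t : ITree} {Y : IHedge} (h : LeftStep [t] Y) {c : ICtx} {C : ITy}
    (hY : Interpolable (c.plug Y) C)
    (inside : ∀ i k D, D ≠ [] → t = .node i (k.plug D) →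
      ∃ E, Interpolant (c.comp (.brk i k [] [])) D C E) :
    Interpolable (c.plug [t]) C := by
  refine h.interpolable hY (fun K D hK hD ht => ?_) ?_ ?_
  · rcases ICtx.singleton_eq_plug hD ht with rfl | ⟨i, k, rfl, hk⟩
    · exact absurd rfl hK
    · exact inside i k D hD hk
  all_goals
    intro _ _ _ _ _ _ _ _ ht
    simp_all [List.singleton_eq_append_iff]

theorem interpolable_leaf {A : ITy} {Y : IHedge} (h : LeftStep [.leaf A] Y) {c : ICtx} {C : ITy}
    (hY : Interpolable (c.plug Y) C) : Interpolable (c.plug [.leaf A]) C :=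
  h.interpolable_singleton hY fun _ _ _ _ ht => nomatch ht

theorem mul (A B : ITy) : LeftStep [.leaf (.mul A B)] [.leaf A, .leaf B] where
  ne_nil := by simp
  derive := .mulL
  counts_le i := by grind

theorem dia (i : ℕ) (A : ITy) : LeftStep [.leaf (.dia i A)] [.node i [.leaf A]] where
  ne_nil := by simp
  derive := .diaL
  counts_le j := by grind

theorem diaOne (i : ℕ) : LeftStep [.leaf (.dia i .one)] [.node i []] where
  ne_nil := by simp
  derive := .diaOneL
  counts_le j := by grind

theorem box (i : ℕ) (A : ITy) : LeftStep [.node i [.leaf (.box i A)]] [.leaf A] where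
  ne_nil := by simp
  derive := .boxL
  counts_le j := by grind

theorem ldiv {S : IHedge} {A : ITy} (hS : CutFree S A) (B : ITy) :
    LeftStep (S ++ [.leaf (.ldiv A B)]) [.leaf B] where
  ne_nil := by simp
  derive := hS.ldivL
  counts_le i := by grind

theorem rdiv {S : IHedge} {A : ITy} (hS : CutFree S A) (B : ITy) :
    LeftStep (.leaf (.rdiv B A) :: S) [.leaf B] where
  ne_nil := by simp
  derive := hS.rdivL
  counts_le i := by grind

end LeftStep

namespace Interpolable

theorem id (p : ℕ) : Interpolable [.leaf (.prim p)] (.prim p) := by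
  intro G D hD h
  obtain rfl := ICtx.eq_hole_of_leaf_eq_plug hD h
  obtain rfl : [.leaf (.prim p)] = D := by simpa using h
  exact ⟨.prim p, trivial, .id p, .id p, fun i => by grind⟩

theorem boxL {c : ICtx} {i : ℕ} {A C : ITy} (h : Interpolable (c.plug [.leaf A]) C) :
    Interpolable (c.plug [.node i [.leaf (.box i A)]]) C := by
  refine (LeftStep.box i A).interpolable_singleton h fun j k D hD ht => ?_
  obtain ⟨rfl, hD'⟩ := ITree.node.inj ht
  obtain rfl := ICtx.eq_hole_of_leaf_eq_plug hD hD'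
  obtain rfl : [.leaf (.box i A)] = D := by simpa using hD'
  obtain ⟨E, hE⟩ := h c [.leaf A] (by simp) rfl
  exact ⟨.box i E, hE.box i⟩

theorem ldivR {S : IHedge} {A B : ITy} (h : Interpolable (.leaf A :: S) B) :
    Interpolable S (.ldiv A B) := by
  rintro G D hD rfl
  obtain ⟨E, hE⟩ := h (.comp (.hole [.leaf A] []) G) D hD (by simp)
  exact ⟨E, hE.map_right (fun hr => .ldivR (by simpa using hr)) fun i => by grind⟩

theorem rdivR {S : IHedge} {A B : ITy} (h : Interpolable (S ++ [.leaf A]) B) :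
    Interpolable S (.rdiv B A) := by
  rintro G D hD rfl
  obtain ⟨E, hE⟩ := h (.comp (.hole [] [.leaf A]) G) D hD (by simp)
  exact ⟨E, hE.map_right (fun hr => .rdivR (by simpa using hr)) fun i => by grind⟩

theorem boxR {S : IHedge} {i : ℕ} {A : ITy} (h : Interpolable [.node i S] A) :
    Interpolable S (.box i A) := by
  rintro G D hD rfl
  obtain ⟨E, hE⟩ := h (.brk i G [] []) D hD (by simp)
  exact ⟨E, hE.map_right (fun hr => .boxR (by simpa using hr)) fun j => by grind⟩

theorem diaR {S : IHedge} {i : ℕ} {A : ITy} (hS : CutFree S A) (h : Interpolable S A) :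
    Interpolable [.node i S] (.dia i A) := by
  intro G D hD hG
  rcases ICtx.singleton_eq_plug hD hG with rfl | ⟨j, k, rfl, hk⟩
  · obtain rfl : [.node i S] = D := by simpa using hG
    rcases eq_or_ne S [] with rfl | hS'
    · exact ⟨.dia i .one, .diaOne hS i⟩
    · obtain ⟨E, hE⟩ := h (.hole [] []) S hS' (by simp)
      exact ⟨.dia i E, hE.dia i⟩
  · obtain ⟨rfl, rfl⟩ := ITree.node.inj hk
    obtain ⟨E, hE⟩ := h k D hD rfl
    exact ⟨E, hE.map_right (fun hr => by simpa using hr.diaR (i := i)) fun j => by grind⟩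

theorem diaOneR (i : ℕ) : Interpolable [.node i []] (.dia i .one) := by
  intro G D hD hG
  rcases ICtx.singleton_eq_plug hD hG with rfl | ⟨j, k, rfl, hk⟩
  · obtain rfl : [.node i []] = D := by simpa using hG
    exact ⟨.dia i .one, trivial, .diaOneR i, .diaOneL (.diaOneR i), fun j => by grind⟩
  · exact absurd (ITree.node.inj hk).2.symm (k.plug_ne_nil hD)

theorem mulR {S T : IHedge} {A B : ITy} (hS : CutFree S A) (hT : CutFree T B)
    (hSA : Interpolable S A) (hTB : Interpolable T B) : Interpolable (S ++ T) (.mul A B) := by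
  intro G D hD h
  rcases ICtx.append_eq_plug h with ⟨k, rfl, rfl⟩ | ⟨k, rfl, rfl⟩ |
    ⟨a, b, U, V, hU, hV, rfl, rfl, rfl, rfl⟩
  · obtain ⟨E, hE⟩ := hSA k D hD rfl
    exact ⟨E, hE.map_right (fun hr => by simpa using hr.mulR hT) fun i => by grind⟩
  · obtain ⟨E, hE⟩ := hTB k D hD rfl
    exact ⟨E, hE.map_right (fun hr => by simpa using hS.mulR hr) fun i => by grind⟩
  · obtain ⟨E, hE⟩ := hSA (.hole a []) U hU (by simp)
    obtain ⟨F, hF⟩ := hTB (.hole [] b) V hV (by simp)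
    exact ⟨.mul E F, hE.mul hF⟩

theorem exists_ldiv {H : ICtx} {S T W : IHedge} {A B C : ITy} (hS : S ≠ [])
    (hA : Interpolable (S ++ T) A) (hC : Interpolable (H.plug (.leaf B :: W)) C) :
    ∃ E, Interpolant (H.comp (.hole S [])) (T ++ .leaf (.ldiv A B) :: W) C E := by
  obtain ⟨F, hF⟩ := hA (.hole [] T) S hS (by simp)
  obtain ⟨E, hE⟩ := hC H (.leaf B :: W) (by simp) rfl
  exact ⟨.ldiv F E, hF.ldiv hE⟩

theorem exists_rdiv {H : ICtx} {S T W : IHedge} {A B C : ITy} (hS : S ≠ [])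
    (hA : Interpolable (T ++ S) A) (hC : Interpolable (H.plug (W ++ [.leaf B])) C) :
    ∃ E, Interpolant (H.comp (.hole [] S)) (W ++ .leaf (.rdiv B A) :: T) C E := by
  obtain ⟨F, hF⟩ := hA (.hole T []) S hS (by simp)
  obtain ⟨E, hE⟩ := hC H (W ++ [.leaf B]) (by simp) rfl
  exact ⟨.rdiv E F, hF.rdiv hE⟩

theorem ldivL {S : IHedge} {c : ICtx} {A B C : ITy} (hS : CutFree S A)
    (hC : CutFree (c.plug [.leaf B]) C) (hSA : Interpolable S A)
    (hBC : Interpolable (c.plug [.leaf B]) C) :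
    Interpolable (c.plug (S ++ [.leaf (.ldiv A B)])) C := by
  refine (LeftStep.ldiv hS B).interpolable hBC (fun K D hK hD h => ?_) ?_ ?_
  · rcases ICtx.append_eq_plug h with ⟨k, rfl, rfl⟩ | ⟨k, rfl, hk⟩ |
      ⟨a, b, U, V, -, hV, rfl, rfl, rfl, hVb⟩
    · obtain ⟨E, hE⟩ := hSA k D hD rfl
      exact ⟨E, hE.map_right (fun hr => by simpa using hr.ldivL hC) fun i => by grind⟩
    · obtain rfl := ICtx.eq_hole_of_leaf_eq_plug hD hk
      obtain rfl : [.leaf (.ldiv A B)] = D := by simpa using hk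
      have hS' : S ≠ [] := by rintro rfl; simp at hK
      simpa using exists_ldiv (T := []) hS' (by simpa using hSA) hBC
    · obtain ⟨rfl, rfl⟩ : V = [.leaf (.ldiv A B)] ∧ b = [] := by
        simpa [List.singleton_eq_append_iff, hV] using hVb
      have ha : a ≠ [] := by rintro rfl; simp at hK
      exact exists_ldiv ha hSA hBC
  · rintro H U V W hU hV hW rfl h
    obtain ⟨T, rfl, rfl⟩ : ∃ T, W = T ++ [.leaf (.ldiv A B)] ∧ S = V ++ T := by
      simpa [hW] using append_eq_append_cons h.symm
    obtain ⟨E, hE⟩ := hBC (H.comp (.hole [] [.leaf B])) U hU (by simp)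
    obtain ⟨F, hF⟩ := hSA (.hole [] T) V hV (by simp)
    exact ⟨.mul E F, hE.mul_ldiv hF⟩
  · rintro H U V W hU hV - rfl h
    obtain ⟨T, rfl, rfl⟩ : ∃ T, V = T ++ [.leaf (.ldiv A B)] ∧ S = U ++ T := by
      simpa [hV] using append_eq_append_cons h.symm
    simpa using exists_ldiv hU hSA (by simpa using hBC)

theorem rdivL {S : IHedge} {c : ICtx} {A B C : ITy} (hS : CutFree S A)
    (hC : CutFree (c.plug [.leaf B]) C) (hSA : Interpolable S A)
    (hBC : Interpolable (c.plug [.leaf B]) C) :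
    Interpolable (c.plug (.leaf (.rdiv B A) :: S)) C := by
  refine (LeftStep.rdiv hS B).interpolable hBC (fun K D hK hD h => ?_) ?_ ?_
  · rcases ICtx.append_eq_plug (S := [.leaf (.rdiv B A)]) h with ⟨k, rfl, hk⟩ | ⟨k, rfl, rfl⟩ |
      ⟨a, b, U, V, hU, -, rfl, rfl, hUa, rfl⟩
    · obtain rfl := ICtx.eq_hole_of_leaf_eq_plug hD hk
      obtain rfl : [.leaf (.rdiv B A)] = D := by simpa using hk
      have hS' : S ≠ [] := by rintro rfl; simp at hK
      simpa using exists_rdiv (T := []) (W := []) hS' hSA (by simpa using hBC)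
    · obtain ⟨E, hE⟩ := hSA k D hD rfl
      exact ⟨E, hE.map_right (fun hr => by simpa using hr.rdivL hC) fun i => by grind⟩
    · obtain ⟨rfl, rfl⟩ : a = [] ∧ U = [.leaf (.rdiv B A)] := by
        simpa [List.singleton_eq_append_iff, hU] using hUa
      have hb : b ≠ [] := by rintro rfl; simp at hK
      simpa using exists_rdiv (W := []) hb hSA (by simpa using hBC)
  · rintro H U V W - hV hW rfl h
    obtain ⟨T, rfl, rfl⟩ : ∃ T, V = .leaf (.rdiv B A) :: T ∧ S = T ++ W := by
      simpa [hV] using List.cons_eq_append_iff.1 h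
    exact exists_rdiv hW hSA (by simpa using hBC)
  · rintro H U V W hU hV hW rfl h
    obtain ⟨T, rfl, rfl⟩ : ∃ T, U = .leaf (.rdiv B A) :: T ∧ S = T ++ V := by
      simpa [hU] using List.cons_eq_append_iff.1 h
    obtain ⟨E, hE⟩ := hBC (H.comp (.hole [.leaf B] [])) W hW (by simp)
    obtain ⟨F, hF⟩ := hSA (.hole T []) V hV (by simp)
    exact ⟨.mul F E, hF.mul_rdiv hE⟩

end Interpolable

theorem CutFree.interpolable {S : IHedge} {C : ITy} (h : CutFree S C) : Interpolable S C := by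
  induction h with
  | id p => exact .id p
  | ldivL hS hC ihS ihC => exact .ldivL hS hC ihS ihC
  | ldivR _ ih => exact ih.ldivR
  | rdivL hS hC ihS ihC => exact .rdivL hS hC ihS ihC
  | rdivR _ ih => exact ih.rdivR
  | mulL _ ih => exact (LeftStep.mul _ _).interpolable_leaf ih
  | mulR hS hT ihS ihT => exact .mulR hS hT ihS ihT
  | diaL _ ih => exact (LeftStep.dia _ _).interpolable_leaf ih
  | diaR hS ih => exact .diaR hS ih
  | boxL _ ih => exact ih.boxL
  | boxR _ ih => exact ih.boxR
  | diaOneL _ ih => exact (LeftStep.diaOne _).interpolable_leaf ih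
  | diaOneR i => exact .diaOneR i

/-! ### Phase-semantic cut elimination -/

namespace CutFree

/-- The relation between hedges and sequents with a hole whose Galois connection defines the phase
semantics: filling the hole yields a derivable sequent. -/
def Derives (X : IHedge) (p : ICtx × ITy) : Prop := CutFree (p.1.plug X) p.2

theorem isExtent_setOf_cutFree (C : ITy) : IsExtent Derives {X | CutFree X C} :=
  ⟨{(.hole [] [], C)}, by ext X; simp [Derives]⟩

theorem isExtent_setOf_plug_mem {s : Set IHedge} (hs : IsExtent Derives s) (k : ICtx) :
    IsExtent Derives {X | k.plug X ∈ s} := by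
  obtain ⟨T, rfl⟩ := hs
  exact ⟨(fun p => (p.1.comp k, p.2)) '' T, by
    ext X; simp [mem_lowerPolar_iff, Set.forall_mem_image, Derives, -Set.mem_image]⟩

/-- The phase-semantic value of a type: a closed set of hedges. -/
def value : ITy → Set IHedge
  | .prim p => {X | CutFree X (.prim p)}
  | .one => extentClosure Derives {[]}
  | .ldiv A B => {X | ∀ Y ∈ value A, Y ++ X ∈ value B}
  | .rdiv B A => {X | ∀ Y ∈ value A, X ++ Y ∈ value B}
  | .mul A B => extentClosure Derives (Set.image2 (· ++ ·) (value A) (value B))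
  | .dia i A => extentClosure Derives ((fun X => [.node i X]) '' value A)
  | .box i A => {X | [.node i X] ∈ value A}

theorem isExtent_value (A : ITy) : IsExtent Derives (value A) := by
  induction A with
  | prim p => exact isExtent_setOf_cutFree _
  | one | mul A B | dia i A => exact isExtent_lowerPolar
  | ldiv A B _ ihB =>
    have h : value (.ldiv A B) = ⋂ Y ∈ value A, {X | (.hole Y [] : ICtx).plug X ∈ value B} := by
      ext X
      simp [value]
    rw [h]
    exact .iInter₂ _ fun Y _ => isExtent_setOf_plug_mem ihB _
  | rdiv B A ihB _ =>
    have h : value (.rdiv B A) = ⋂ Y ∈ value A, {X | (.hole [] Y : ICtx).plug X ∈ value B} := by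
      ext X
      simp [value]
    rw [h]
    exact .iInter₂ _ fun Y _ => isExtent_setOf_plug_mem ihB _
  | box i A ih => simpa [value] using isExtent_setOf_plug_mem ih (.brk i (.hole [] []) [] [])

mutual
/-- The value of a type tree: the leaves are replaced by elements of the values of their types. -/
def valueTree : ITree → Set IHedge
  | .leaf A => value A
  | .node i S => (fun X => [.node i X]) '' valueHedge S
/-- The value of a hedge, extending `valueTree` to concatenations. -/
def valueHedge : List ITree → Set IHedge
  | [] => {[]}
  | t :: S => Set.image2 (· ++ ·) (valueTree t) (valueHedge S)
end

/-- The value of a context: the contexts obtained by replacing its leaves by elements of the values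
of their types. -/
def valueCtx : ICtx → Set ICtx
  | .hole a b => Set.image2 .hole (valueHedge a) (valueHedge b)
  | .brk i c a b =>
    {k | ∃ k' ∈ valueCtx c, ∃ U ∈ valueHedge a, ∃ V ∈ valueHedge b, .brk i k' U V = k}

theorem valueHedge_singleton (t : ITree) : valueHedge [t] = valueTree t := by
  simp [valueHedge]

theorem valueHedge_append (S T : IHedge) :
    valueHedge (S ++ T) = Set.image2 (· ++ ·) (valueHedge S) (valueHedge T) := by
  induction S with
  | nil => simp [valueHedge]
  | cons t S ih =>
    simp only [List.cons_append, valueHedge, ih]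
    exact (Set.image2_assoc List.append_assoc).symm

theorem mem_valueHedge_plug {c : ICtx} {S X : IHedge} :
    X ∈ valueHedge (c.plug S) ↔ ∃ k ∈ valueCtx c, ∃ Y ∈ valueHedge S, k.plug Y = X := by
  induction c generalizing X with
  | hole a b =>
    simp only [ICtx.plug, valueHedge_append, valueCtx, Set.mem_image2]
    constructor
    · rintro ⟨_, ⟨U, hU, Y, hY, rfl⟩, V, hV, rfl⟩
      exact ⟨_, ⟨U, hU, V, hV, rfl⟩, Y, hY, rfl⟩
    · rintro ⟨_, ⟨U, hU, V, hV, rfl⟩, Y, hY, rfl⟩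
      exact ⟨_, ⟨U, hU, Y, hY, rfl⟩, V, hV, rfl⟩
  | brk i c a b ih =>
    simp only [ICtx.plug, valueHedge_append, valueHedge, valueTree, valueCtx, Set.mem_image2,
      Set.mem_image, Set.mem_ofPred_eq, ih]
    constructor
    · rintro ⟨U, hU, _, ⟨_, ⟨_, ⟨k, hk, Y, hY, rfl⟩, rfl⟩, V, hV, rfl⟩, rfl⟩
      exact ⟨_, ⟨k, hk, U, hU, V, hV, rfl⟩, Y, hY, rfl⟩
    · rintro ⟨_, ⟨k, hk, U, hU, V, hV, rfl⟩, Y, hY, rfl⟩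
      exact ⟨U, hU, _, ⟨_, ⟨_, ⟨k, hk, Y, hY, rfl⟩, rfl⟩, V, hV, rfl⟩, rfl⟩

/-- Every left rule, and the cut rule, is an instance of this monotonicity. -/
theorem valueHedge_plug_subset {c : ICtx} {X Y : IHedge} {C : ITy}
    (hXY : valueHedge X ⊆ extentClosure Derives (valueHedge Y))
    (hY : valueHedge (c.plug Y) ⊆ value C) : valueHedge (c.plug X) ⊆ value C := by
  intro Z hZ
  obtain ⟨k, hk, X', hX', rfl⟩ := mem_valueHedge_plug.1 hZ
  refine (isExtent_setOf_plug_mem (isExtent_value C) k).lowerPolar_upperPolar_subset ?_ (hXY hX')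
  exact fun Y' hY' => hY (mem_valueHedge_plug.2 ⟨k, hk, Y', hY', rfl⟩)

theorem valueHedge_append_ldiv_subset {S : IHedge} {A : ITy} (B : ITy)
    (hS : valueHedge S ⊆ value A) : valueHedge (S ++ [.leaf (.ldiv A B)]) ⊆ value B := by
  rw [valueHedge_append, valueHedge_singleton]
  rintro _ ⟨U, hU, V, hV, rfl⟩
  exact hV U (hS hU)

theorem valueHedge_rdiv_cons_subset {S : IHedge} {A : ITy} (B : ITy)
    (hS : valueHedge S ⊆ value A) : valueHedge (.leaf (.rdiv B A) :: S) ⊆ value B := by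
  rintro _ ⟨V, hV, U, hU, rfl⟩
  exact hV U (hS hU)

theorem valueHedge_node_box_subset (i : ℕ) (A : ITy) :
    valueHedge [.node i [.leaf (.box i A)]] ⊆ value A := by
  simp only [valueHedge_singleton, valueTree]
  rintro _ ⟨X, hX, rfl⟩
  exact hX

theorem valueHedge_subset_value {S : IHedge} {C : ITy} (h : IProvS1 S C) :
    valueHedge S ⊆ value C := by
  induction h with
  | id p => exact (valueHedge_singleton _).subset
  | ldivL S c A B C _ _ ihS ihC =>
    refine valueHedge_plug_subset (.trans ?_ (subset_lowerPolar_upperPolar _ _)) ihC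
    rw [valueHedge_singleton (.leaf B)]
    exact valueHedge_append_ldiv_subset B ihS
  | ldivR S A _ _ ih => exact fun X hX Y hY => ih ⟨Y, hY, X, hX, rfl⟩
  | rdivL S c A B C _ _ ihS ihC =>
    refine valueHedge_plug_subset (.trans ?_ (subset_lowerPolar_upperPolar _ _)) ihC
    rw [valueHedge_singleton (.leaf B)]
    exact valueHedge_rdiv_cons_subset B ihS
  | rdivR S A B _ ih =>
    rw [valueHedge_append, valueHedge_singleton] at ih
    exact fun X hX Y hY => ih ⟨X, hX, Y, hY, rfl⟩
  | mulL c A B C _ ih =>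
    exact valueHedge_plug_subset (Eq.subset (by simp [valueHedge, valueTree, value])) ih
  | mulR S T A B _ _ ihS ihT =>
    rw [valueHedge_append]
    exact (Set.image2_subset ihS ihT).trans (subset_lowerPolar_upperPolar _ _)
  | diaL c i A C _ ih =>
    exact valueHedge_plug_subset (Eq.subset (by simp [valueHedge, valueTree, value])) ih
  | diaR S i A _ ih =>
    rw [valueHedge_singleton]
    exact (Set.image_mono ih).trans (subset_lowerPolar_upperPolar _ _)
  | boxL c i A C _ ih =>
    refine valueHedge_plug_subset (.trans ?_ (subset_lowerPolar_upperPolar _ _)) ih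
    rw [valueHedge_singleton (.leaf A)]
    exact valueHedge_node_box_subset i A
  | boxR S i A _ ih =>
    rw [valueHedge_singleton] at ih
    exact fun X hX => ih ⟨X, hX, rfl⟩
  | oneL c C _ ih => exact valueHedge_plug_subset (valueHedge_singleton _).subset ih
  | oneR => exact subset_lowerPolar_upperPolar _ _
  | cut S c A C _ _ ihS ihC =>
    refine valueHedge_plug_subset (.trans ?_ (subset_lowerPolar_upperPolar _ _)) ihC
    rwa [valueHedge_singleton]

theorem mem_of_isExtent {s : Set IHedge} (hs : IsExtent Derives s) {X Y : IHedge} (hY : Y ∈ s)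
    (h : ∀ {c : ICtx} {C : ITy}, CutFree (c.plug Y) C → CutFree (c.plug X) C) : X ∈ s :=
  hs.lowerPolar_upperPolar_subset subset_rfl fun _ hp => h (hp hY)

theorem cutFree_of_mem_extentClosure {s : Set IHedge} {C : ITy} (hs : ∀ Y ∈ s, CutFree Y C)
    {X : IHedge} (hX : X ∈ extentClosure Derives s) : CutFree X C :=
  (isExtent_setOf_cutFree C).lowerPolar_upperPolar_subset hs hX

theorem leaf_dia_one_mem_value (i : ℕ) : [.leaf (.dia i .one)] ∈ value (.dia i .one) :=
  mem_of_isExtent (isExtent_value _)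
    (subset_lowerPolar_upperPolar _ _ ⟨[], subset_lowerPolar_upperPolar _ _ rfl, rfl⟩) .diaOneL

theorem cutFree_of_mem_value_dia_one {i : ℕ} {X : IHedge} (hX : X ∈ value (.dia i .one)) :
    CutFree X (.dia i .one) := by
  refine cutFree_of_mem_extentClosure ?_ hX
  rintro _ ⟨Y, hY, rfl⟩
  have h := isExtent_setOf_plug_mem (isExtent_setOf_cutFree (.dia i .one))
    (.brk i (.hole [] []) [] [])
  simpa using h.lowerPolar_upperPolar_subset (by simpa using CutFree.diaOneR i) hY

theorem leaf_mem_value_and_cutFree {A : ITy} (hA : A.guarded) :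
    [.leaf A] ∈ value A ∧ ∀ X ∈ value A, CutFree X A := by
  induction A with
  | prim p => exact ⟨.id p, fun _ hX => hX⟩
  | one => exact hA.elim
  | ldiv A B ihA ihB =>
    obtain ⟨memA, cutFreeA⟩ := ihA hA.1
    obtain ⟨memB, cutFreeB⟩ := ihB hA.2
    exact ⟨fun Y hY => mem_of_isExtent (isExtent_value B) memB (cutFreeA Y hY).ldivL,
      fun X hX => .ldivR (cutFreeB _ (hX _ memA))⟩
  | rdiv B A ihB ihA =>
    obtain ⟨memA, cutFreeA⟩ := ihA hA.2
    obtain ⟨memB, cutFreeB⟩ := ihB hA.1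
    exact ⟨fun Y hY => mem_of_isExtent (isExtent_value B) memB (cutFreeA Y hY).rdivL,
      fun X hX => .rdivR (cutFreeB _ (hX _ memA))⟩
  | mul A B ihA ihB =>
    obtain ⟨memA, cutFreeA⟩ := ihA hA.1
    obtain ⟨memB, cutFreeB⟩ := ihB hA.2
    refine ⟨mem_of_isExtent (isExtent_value _)
      (subset_lowerPolar_upperPolar _ _ ⟨_, memA, _, memB, rfl⟩) .mulL,
      fun X => cutFree_of_mem_extentClosure ?_⟩
    rintro _ ⟨U, hU, V, hV, rfl⟩
    exact (cutFreeA U hU).mulR (cutFreeB V hV)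
  | dia i A ih =>
    rcases ITy.guarded_of_dia hA with rfl | hA
    · exact ⟨leaf_dia_one_mem_value i, fun _ => cutFree_of_mem_value_dia_one⟩
    obtain ⟨memA, cutFreeA⟩ := ih hA
    refine ⟨mem_of_isExtent (isExtent_value _)
      (subset_lowerPolar_upperPolar _ _ ⟨_, memA, rfl⟩) .diaL,
      fun X => cutFree_of_mem_extentClosure ?_⟩
    rintro _ ⟨U, hU, rfl⟩
    exact (cutFreeA U hU).diaR
  | box i A ih =>
    obtain ⟨memA, cutFreeA⟩ := ih hA
    exact ⟨mem_of_isExtent (isExtent_value A) memA .boxL, fun X hX => .boxR (cutFreeA _ hX)⟩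

mutual
theorem self_mem_valueTree : (t : ITree) → guardedTree t → [t] ∈ valueTree t
  | .leaf _, h => (leaf_mem_value_and_cutFree h).1
  | .node _ S, h => ⟨S, self_mem_valueHedge S h, rfl⟩
theorem self_mem_valueHedge : (S : IHedge) → guardedHedge S → S ∈ valueHedge S
  | [], _ => rfl
  | t :: S, h => ⟨[t], self_mem_valueTree t h.1, S, self_mem_valueHedge S h.2, rfl⟩
end

end CutFree

theorem IProvS1.cutFree {S : IHedge} {C : ITy} (h : IProvS1 S C) (hS : guardedHedge S)
    (hC : C.guarded) : CutFree S C :=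
  (CutFree.leaf_mem_value_and_cutFree hC).2 S
    (CutFree.valueHedge_subset_value h (CutFree.self_mem_valueHedge S hS))

/-- Guarded interpolation for L*₁◇_m. -/
theorem guarded_interpolation (G : ICtx) (D : IHedge) (C : ITy)
    (hD : D ≠ [])
    (hguard : guardedHedge (G.plug D)) (hC : C.guarded)
    (h : IProvS1 (G.plug D) C) :
    ∃ E : ITy,
      E.guarded ∧
      IProvS1 D E ∧
      IProvS1 (G.plug [.leaf E]) C ∧
      (∀ i, sigmaTy i E ≤ min (sigmaHedge i D) (sigmaCtx i G + sigmaTy i C)) ∧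
      (∀ i, tauTy i E ≤ min (tauHedge i D) (tauCtx i G + tauTy i C)) := by
  obtain ⟨E, hE⟩ := (h.cutFree hguard hC).interpolable G D hD rfl
  exact ⟨E, hE.guarded, hE.left.toIProvS1, hE.right.toIProvS1,
    fun i => (hE.counts_le i).1, fun i => (hE.counts_le i).2⟩
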